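/- Let K be an algebraically closed field with a nontrivial non-archimedean valuation v: K* → ℝ, valuation ring R, and residue field k of characteristic different from 2 and 3. If W and W' are two minimal integral Weierstrass models of the same elliptic curve E over K, then their reduced Weierstrass equations over k are related by an admissible change of variables over k with unit scaling factor; in particular the reduced curves W̄ and W̄' over k are isomorphic, so the reduced curve of a minimal model is independent of the choice of minimal model up to isomorphism. -/

import Mathlib

open WeierstrassCurve

/-- A Weierstrass model is *integral* with respect to the additive valuation `v` if all of its
coefficients have nonnegative valuation, i.e. lie in the valuation ring `R`. -/
def IsIntegralModel {K : Type*} [Field K] (v : AddValuation K (WithTop ℝ))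
    (W : WeierstrassCurve K) : Prop :=
  0 ≤ v W.a₁ ∧ 0 ≤ v W.a₂ ∧ 0 ≤ v W.a₃ ∧ 0 ≤ v W.a₄ ∧ 0 ≤ v W.a₆

/-- `W` is a Weierstrass model of (the elliptic curve defined by) `E` if it is obtained from `E`
by an admissible change of variables `x = u²x + r`, `y = u³y + u²sx + t`. -/
def IsModelOf {K : Type*} [Field K] (E W : WeierstrassCurve K) : Prop :=
  ∃ C : VariableChange K, W = C • E

/-- `W` is a *minimal integral Weierstrass model* of `E`: it is an integral model of `E` whose
discriminant has minimal valuation among all integral models of `E`. -/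
def IsMinimalModel {K : Type*} [Field K] (v : AddValuation K (WithTop ℝ))
    (E W : WeierstrassCurve K) : Prop :=
  IsModelOf E W ∧ IsIntegralModel v W ∧
    ∀ W' : WeierstrassCurve K, IsModelOf E W' → IsIntegralModel v W' → v W.Δ ≤ v W'.Δ

/-!
Suppose `W` and `C • W` are both integral, where `C = (u, r, s, t)`. Equality of the minimal
discriminant valuations together with `Δ(W) = u¹² Δ(C • W)` forces `v u = 0`. The transformation
laws of `b₆` and `b₈` give a cubic and a quartic relation for `r`, with leading coefficients `4`
and `3`; `r` times the first minus the second is *monic* in `r`, so `r` is integral because the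
valuation ring is integrally closed. The transformation laws of `a₂` and `a₆` are then monic
quadratics in `s` and `t`.
-/

lemma unit_pow_mul_inv_pow_mul {M : Type*} [CommMonoid M] (u : Mˣ) (n : ℕ) (x : M) :
    (u : M) ^ n * ((↑u⁻¹ : M) ^ n * x) = x := by
  rw [← mul_assoc, ← mul_pow, Units.mul_inv, one_pow, one_mul]

section Subring

variable {A : Type*} [CommRing A] {S : Subring A}

lemma mem_of_pow_eq_sum [IsIntegrallyClosedIn S A] {n : ℕ} {x : A} {c : Fin n → A}
    (hc : ∀ i, c i ∈ S) (hx : x ^ n = ∑ i, c i * x ^ (i : ℕ)) : x ∈ S := by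
  let p : Polynomial S := .X ^ n - ∑ i : Fin n, .C ⟨c i, hc i⟩ * .X ^ (i : ℕ)
  have hp : p.Monic := Polynomial.monic_X_pow_sub (Polynomial.degree_sum_fin_lt _)
  have hpx : Polynomial.aeval x p = 0 := by simp [p, hx, Algebra.algebraMap_ofSubring]
  obtain ⟨y, rfl⟩ := IsIntegrallyClosedIn.isIntegral_iff.mp ⟨p, hp, hpx⟩
  exact y.2

lemma mem_of_sq_eq [IsIntegrallyClosedIn S A] {x b c : A} (hb : b ∈ S) (hc : c ∈ S)
    (hx : x ^ 2 = c + b * x) : x ∈ S :=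
  mem_of_pow_eq_sum (c := ![c, b]) (by simp [Fin.forall_fin_two, hb, hc]) (by simpa using hx)

/-- The Weierstrass equation `W` has all of its coefficients in the subring `S`. For `S` the
valuation ring of `v` this is `IsIntegralModel v W`; the algebra of changes of variables is carried
out for an arbitrary integrally closed `S`. -/
structure HasCoeffsIn (S : Subring A) (W : WeierstrassCurve A) : Prop where
  a₁_mem : W.a₁ ∈ S
  a₂_mem : W.a₂ ∈ S
  a₃_mem : W.a₃ ∈ S
  a₄_mem : W.a₄ ∈ S
  a₆_mem : W.a₆ ∈ S

namespace HasCoeffsIn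

variable {W : WeierstrassCurve A}

lemma b₄_mem (hW : HasCoeffsIn S W) : W.b₄ ∈ S :=
  add_mem (mul_mem (ofNat_mem S 2) hW.a₄_mem) (mul_mem hW.a₁_mem hW.a₃_mem)

lemma b₆_mem (hW : HasCoeffsIn S W) : W.b₆ ∈ S :=
  add_mem (pow_mem hW.a₃_mem 2) (mul_mem (ofNat_mem S 4) hW.a₆_mem)

lemma b₈_mem (hW : HasCoeffsIn S W) : W.b₈ ∈ S := by
  obtain ⟨h₁, h₂, h₃, h₄, h₆⟩ := hW
  have h : W.a₁ ^ 2 * W.a₆ + 4 * W.a₂ * W.a₆ ∈ S :=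
    add_mem (mul_mem (pow_mem h₁ 2) h₆) (mul_mem (mul_mem (ofNat_mem S 4) h₂) h₆)
  exact sub_mem (add_mem (sub_mem h (mul_mem (mul_mem h₁ h₃) h₄)) (mul_mem h₂ (pow_mem h₃ 2)))
    (pow_mem h₄ 2)

end HasCoeffsIn

end Subring

section VariableChange

variable {A : Type*} [CommRing A] (W : WeierstrassCurve A) (C : VariableChange A)

lemma variableChange_r_pow_four :
    C.r ^ 4 = W.b₈ - C.u ^ 8 * (C • W).b₈ + (2 * W.b₆ + C.u ^ 6 * (C • W).b₆) * C.r
      + W.b₄ * C.r ^ 2 := by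
  rw [variableChange_b₆, variableChange_b₈, unit_pow_mul_inv_pow_mul, unit_pow_mul_inv_pow_mul]
  ring

lemma variableChange_s_sq :
    C.s ^ 2 = W.a₂ + 3 * C.r - C.u ^ 2 * (C • W).a₂ + -W.a₁ * C.s := by
  rw [variableChange_a₂, unit_pow_mul_inv_pow_mul]
  ring

lemma variableChange_t_sq :
    C.t ^ 2 = W.a₆ + C.r * W.a₄ + C.r ^ 2 * W.a₂ + C.r ^ 3 - C.u ^ 6 * (C • W).a₆
      + -(W.a₃ + C.r * W.a₁) * C.t := by
  rw [variableChange_a₆, unit_pow_mul_inv_pow_mul]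
  ring

end VariableChange

namespace HasCoeffsIn

variable {A : Type*} [CommRing A] {S : Subring A} [IsIntegrallyClosedIn S A]
  {W : WeierstrassCurve A} {C : VariableChange A}

lemma variableChange_r_mem (hW : HasCoeffsIn S W) (hCW : HasCoeffsIn S (C • W))
    (hu : (C.u : A) ∈ S) : C.r ∈ S := by
  have hconst : W.b₈ - C.u ^ 8 * (C • W).b₈ ∈ S :=
    sub_mem hW.b₈_mem (mul_mem (pow_mem hu 8) hCW.b₈_mem)
  have hlin : 2 * W.b₆ + C.u ^ 6 * (C • W).b₆ ∈ S :=
    add_mem (mul_mem (ofNat_mem S 2) hW.b₆_mem) (mul_mem (pow_mem hu 6) hCW.b₆_mem)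
  refine mem_of_pow_eq_sum (n := 4)
    (c := ![W.b₈ - C.u ^ 8 * (C • W).b₈, 2 * W.b₆ + C.u ^ 6 * (C • W).b₆, W.b₄, 0]) ?_ ?_
  · simp [Fin.forall_fin_succ, hconst, hlin, hW.b₄_mem]
  · simpa [Fin.sum_univ_four] using variableChange_r_pow_four W C

lemma variableChange_s_mem (hW : HasCoeffsIn S W) (hCW : HasCoeffsIn S (C • W))
    (hu : (C.u : A) ∈ S) : C.s ∈ S := by
  have hr : C.r ∈ S := hW.variableChange_r_mem hCW hu
  have hconst : W.a₂ + 3 * C.r - C.u ^ 2 * (C • W).a₂ ∈ S :=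
    sub_mem (add_mem hW.a₂_mem (mul_mem (ofNat_mem S 3) hr))
      (mul_mem (pow_mem hu 2) hCW.a₂_mem)
  exact mem_of_sq_eq (neg_mem hW.a₁_mem) hconst (variableChange_s_sq W C)

lemma variableChange_t_mem (hW : HasCoeffsIn S W) (hCW : HasCoeffsIn S (C • W))
    (hu : (C.u : A) ∈ S) : C.t ∈ S := by
  have hr : C.r ∈ S := hW.variableChange_r_mem hCW hu
  have hcubic : W.a₆ + C.r * W.a₄ + C.r ^ 2 * W.a₂ + C.r ^ 3 ∈ S :=
    add_mem (add_mem (add_mem hW.a₆_mem (mul_mem hr hW.a₄_mem))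
      (mul_mem (pow_mem hr 2) hW.a₂_mem)) (pow_mem hr 3)
  exact mem_of_sq_eq (neg_mem (add_mem hW.a₃_mem (mul_mem hr hW.a₁_mem)))
    (sub_mem hcubic (mul_mem (pow_mem hu 6) hCW.a₆_mem)) (variableChange_t_sq W C)

end HasCoeffsIn

section Valuation

variable {K Γ : Type*} [Field K] [LinearOrderedAddCommGroupWithTop Γ] (v : AddValuation K Γ)

/-- The valuation ring `{x | 0 ≤ v x}` of an additive valuation, obtained from the associated
multiplicative valuation. -/
def addValuationInteger : Subring K := (AddValuation.toValuation v).integer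

variable {v} in
lemma mem_addValuationInteger {x : K} : x ∈ addValuationInteger v ↔ 0 ≤ v x := Iff.rfl

instance isIntegrallyClosedIn_addValuationInteger :
    IsIntegrallyClosedIn (addValuationInteger v) K :=
  (IsIntegrallyClosedIn.integralClosure_eq_bot_iff K Subtype.coe_injective).mp
    (Valuation.integer.integers _).integralClosure

variable {v} in
lemma valuation_variableChange_u_eq_zero {W : WeierstrassCurve K} {C : VariableChange K}
    (hΔ : W.Δ ≠ 0) (hv : v (C • W).Δ = v W.Δ) : v (C.u : K) = 0 := by
  have hΔ_eq : (C.u : K) ^ 12 * (C • W).Δ = W.Δ := by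
    rw [variableChange_Δ, unit_pow_mul_inv_pow_mul]
  have hadd : 12 • v (C.u : K) + v W.Δ = 0 + v W.Δ := by
    rw [← v.map_pow, ← hv, ← v.map_mul, hΔ_eq, hv, zero_add]
  have hsmul : 12 • v (C.u : K) = 0 :=
    (IsAddRegular.of_ne_top (v.ne_top_iff.mpr hΔ)).right hadd
  exact le_antisymm ((nsmul_nonpos_iff (by norm_num)).mp hsmul.le)
    ((nsmul_nonneg_iff (by norm_num)).mp hsmul.ge)

end Valuation

section Model

variable {K : Type*} [Field K] {v : AddValuation K (WithTop ℝ)} {E W W' : WeierstrassCurve K}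

lemma IsIntegralModel.hasCoeffsIn (hW : IsIntegralModel v W) :
    HasCoeffsIn (addValuationInteger v) W :=
  let ⟨h₁, h₂, h₃, h₄, h₆⟩ := hW
  ⟨h₁, h₂, h₃, h₄, h₆⟩

lemma IsModelOf.Δ_ne_zero (hW : IsModelOf E W) (hΔ : E.Δ ≠ 0) : W.Δ ≠ 0 := by
  obtain ⟨C, rfl⟩ := hW
  rw [variableChange_Δ]
  exact mul_ne_zero (pow_ne_zero _ (Units.ne_zero _)) hΔ

lemma IsModelOf.exists_eq_smul (hW : IsModelOf E W) (hW' : IsModelOf E W') :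
    ∃ C : VariableChange K, W' = C • W := by
  obtain ⟨C, rfl⟩ := hW
  obtain ⟨C', rfl⟩ := hW'
  exact ⟨C' * C⁻¹, by rw [mul_smul, inv_smul_smul]⟩

lemma IsMinimalModel.valuation_Δ_eq (hW : IsMinimalModel v E W) (hW' : IsMinimalModel v E W') :
    v W.Δ = v W'.Δ :=
  le_antisymm (hW.2.2 W' hW'.1 hW'.2.1) (hW'.2.2 W hW.1 hW.2.1)

end Model

theorem statement13_general {K : Type*} [Field K] (v : AddValuation K (WithTop ℝ))
    (E W W' : WeierstrassCurve K) (hΔ : E.Δ ≠ 0)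
    (hW : IsMinimalModel v E W) (hW' : IsMinimalModel v E W') :
    ∃ C : VariableChange K, W' = C • W ∧
      v (C.u : K) = 0 ∧ 0 ≤ v C.r ∧ 0 ≤ v C.s ∧ 0 ≤ v C.t := by
  obtain ⟨C, rfl⟩ := hW.1.exists_eq_smul hW'.1
  have hu : v (C.u : K) = 0 :=
    valuation_variableChange_u_eq_zero (hW.1.Δ_ne_zero hΔ) (hW'.valuation_Δ_eq hW)
  have hu_mem : (C.u : K) ∈ addValuationInteger v := mem_addValuationInteger.mpr hu.ge
  have hcoeffs := hW.2.1.hasCoeffsIn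
  have hcoeffs' := hW'.2.1.hasCoeffsIn
  exact ⟨C, rfl, hu, hcoeffs.variableChange_r_mem hcoeffs' hu_mem,
    hcoeffs.variableChange_s_mem hcoeffs' hu_mem, hcoeffs.variableChange_t_mem hcoeffs' hu_mem⟩

/-- Any two minimal integral Weierstrass models `W`, `W'` of the same
elliptic curve `E` over `K` are related by an admissible change of variables `(u, r, s, t)`
with `v u = 0` (unit scaling factor) and `r, s, t` in the valuation ring; reducing this change
of variables modulo the maximal ideal gives an admissible change of variables over the residue
field `k` with unit scaling factor relating the reduced Weierstrass equations, so the reduced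
curves are isomorphic and the reduced curve of a minimal model is independent of the choice of
minimal model up to isomorphism. -/
theorem statement13 {K : Type*} [Field K] [IsAlgClosed K] (v : AddValuation K (WithTop ℝ))
    (hv : ∃ x : K, x ≠ 0 ∧ v x ≠ 0) (hv2 : v (2 : K) = 0) (hv3 : v (3 : K) = 0)
    (E W W' : WeierstrassCurve K) (hΔ : E.Δ ≠ 0)
    (hW : IsMinimalModel v E W) (hW' : IsMinimalModel v E W') :
    ∃ C : VariableChange K, W' = C • W ∧
      v (C.u : K) = 0 ∧ 0 ≤ v C.r ∧ 0 ≤ v C.s ∧ 0 ≤ v C.t :=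
  statement13_general v E W W' hΔ hW hW'
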